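/- Let m ≥ 2, let c₃,…,c_m be pairwise distinct nonzero complex numbers, set α₂ = y and αⱼ = cⱼx + y for 3 ≤ j ≤ m, and let β̃ ∈ ℂ^m with β̃₁ ≠ −1. In A₂ define P = X∂x + Y∂y − |β̃| (|β̃| = Σᵢβ̃ᵢ) and Q = (Π_{j=2}^m Aⱼ)∂y − Σ_{i=2}^m β̃ᵢ Π_{j=2, j≠i}^m Aⱼ, where Aⱼ is multiplication by αⱼ. Then the left ideals satisfy A₂X + A₂P + A₂Q = A₂X + A₂(Y∂y − (|β̃|+1)) + A₂Y^{m−2}. -/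

import Mathlib

set_option synthInstance.maxHeartbeats 1000000
set_option maxHeartbeats 1000000

open MvPolynomial

/-- Multiplication by the first variable `x`, as an endomorphism of `ℂ[x,y]`. -/
noncomputable def Xop : Module.End ℂ (MvPolynomial (Fin 2) ℂ) := LinearMap.mulLeft ℂ (X 0)

/-- Multiplication by the second variable `y`, as an endomorphism of `ℂ[x,y]`. -/
noncomputable def Yop : Module.End ℂ (MvPolynomial (Fin 2) ℂ) := LinearMap.mulLeft ℂ (X 1)

/-- The formal partial derivative `∂x`, as an endomorphism of `ℂ[x,y]`. -/
noncomputable def Dxop : Module.End ℂ (MvPolynomial (Fin 2) ℂ) :=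
  (pderiv (0 : Fin 2) : Derivation ℂ (MvPolynomial (Fin 2) ℂ) (MvPolynomial (Fin 2) ℂ)).toLinearMap

/-- The formal partial derivative `∂y`, as an endomorphism of `ℂ[x,y]`. -/
noncomputable def Dyop : Module.End ℂ (MvPolynomial (Fin 2) ℂ) :=
  (pderiv (1 : Fin 2) : Derivation ℂ (MvPolynomial (Fin 2) ℂ) (MvPolynomial (Fin 2) ℂ)).toLinearMap

/-- The Weyl algebra `A₂`, realized as the ℂ-subalgebra of `End_ℂ(ℂ[x,y])` generated by
`X`, `Y`, `∂x`, `∂y`. -/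
noncomputable def A2 : Subalgebra ℂ (Module.End ℂ (MvPolynomial (Fin 2) ℂ)) :=
  Algebra.adjoin ℂ {Xop, Yop, Dxop, Dyop}

/-- `X`, `Y`, `∂x`, `∂y` as elements of `A₂`. -/
noncomputable def wX : A2 := ⟨Xop, Algebra.subset_adjoin (by simp)⟩
noncomputable def wY : A2 := ⟨Yop, Algebra.subset_adjoin (by simp)⟩
noncomputable def wDx : A2 := ⟨Dxop, Algebra.subset_adjoin (by simp)⟩
noncomputable def wDy : A2 := ⟨Dyop, Algebra.subset_adjoin (by simp)⟩

/-- The operator `Aⱼ` of multiplication by the linear form `αⱼ`, where `α₂ = y` and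
`αⱼ = cⱼ·x + y` for `j ≥ 3`, as an element of `A₂`. -/
noncomputable def mulForm (c : ℕ → ℂ) (j : ℕ) : A2 := if j = 2 then wY else c j • wX + wY


theorem add_mul_sub_add_smul_eq {R : Type*} [Ring R] [Algebra ℂ R] {x d : R}
    (h : x * d = d * x) (q r w y : R) (b t : ℂ) :
    (q * x + w * y) * d - (r * x + t • w) =
      (q * d - r) * x + w * (y * d - algebraMap ℂ R (b + t + 1)) + (b + 1) • w := by
  rw [mul_sub, add_mul, sub_mul, mul_assoc q, h, Algebra.algebraMap_eq_smul_one, mul_smul_comm,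
    mul_one]
  simp only [mul_assoc, add_smul]
  abel

theorem span_triple_eq_of_eq {R : Type*} [Ring R] [Algebra ℂ R] {x p q t w d u v : R} {k : ℂ}
    (hk : k ≠ 0) (hp : p = d * x + t) (hq : q = u * x + v * t + k • w) :
    Ideal.span {x, p, q} = Ideal.span {x, t, w} := by
  apply le_antisymm <;> rw [Ideal.span_le]
  · set I : Ideal R := Ideal.span {x, t, w}
    have hx : x ∈ I := Ideal.subset_span (by simp)
    have ht : t ∈ I := Ideal.subset_span (by simp)
    have hw : w ∈ I := Ideal.subset_span (by simp)
    rintro z (rfl | rfl | rfl)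
    · exact hx
    · rw [hp]
      exact I.add_mem (I.mul_mem_left _ hx) ht
    · rw [hq]
      exact I.add_mem (I.add_mem (I.mul_mem_left _ hx) (I.mul_mem_left _ ht))
        (Submodule.smul_of_tower_mem I _ hw)
  · set I : Ideal R := Ideal.span {x, p, q}
    have hx : x ∈ I := Ideal.subset_span (by simp)
    have hpI : p ∈ I := Ideal.subset_span (by simp)
    have hqI : q ∈ I := Ideal.subset_span (by simp)
    have ht : t ∈ I := by
      rw [hp] at hpI
      exact (I.add_mem_iff_right (I.mul_mem_left _ hx)).1 hpI
    have hw : w ∈ I := by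
      rw [hq] at hqI
      have hsmul := (I.add_mem_iff_right
        (I.add_mem (I.mul_mem_left _ hx) (I.mul_mem_left _ ht))).1 hqI
      simpa [smul_smul, inv_mul_cancel₀ hk] using Submodule.smul_of_tower_mem I k⁻¹ hsmul
    rintro z (rfl | rfl | rfl)
    · exact hx
    · exact ht
    · exact hw

theorem wX_mul_wY : wX * wY = wY * wX := by
  apply Subtype.ext
  refine LinearMap.ext fun p => ?_
  simp [wX, wY, Xop, Yop, mul_left_comm]

theorem wX_mul_wDy : wX * wDy = wDy * wX := by
  apply Subtype.ext
  refine LinearMap.ext fun p => ?_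
  simp [wX, wDy, Xop, Dyop, pderiv_X]

theorem wDx_mul_wX : wDx * wX = wX * wDx + 1 := by
  apply Subtype.ext
  refine LinearMap.ext fun p => ?_
  simp [wX, wDx, Xop, Dxop, pderiv_X]

/-- Modulo the left ideal `A₂X`, a product of the forms `αⱼ` is a power of `Y`. -/
theorem exists_prod_mulForm_eq (c : ℕ → ℂ) (l : List ℕ) :
    ∃ q : A2, (l.map (mulForm c)).prod = q * wX + wY ^ l.length := by
  induction l with
  | nil => exact ⟨0, by simp⟩
  | cons j l ih =>
    obtain ⟨q, hq⟩ := ih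
    obtain ⟨a, ha⟩ : ∃ a : ℂ, mulForm c j = a • wX + wY := by
      unfold mulForm
      split_ifs
      · exact ⟨0, by simp⟩
      · exact ⟨c j, rfl⟩
    have hcomm : wX * wY ^ l.length = wY ^ l.length * wX :=
      (show Commute wX wY from wX_mul_wY).pow_right _
    refine ⟨a • (wX * q) + a • wY ^ l.length + wY * q, ?_⟩
    rw [List.map_cons, List.prod_cons, hq, ha, List.length_cons, pow_succ']
    simp only [add_mul, mul_add, smul_mul_assoc, hcomm, mul_assoc]
    abel

theorem length_filter_ne_range' {m i : ℕ} (hi : i ∈ Finset.Icc 2 m) :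
    ((List.range' 2 (m - 1)).filter (· ≠ i)).length = m - 2 := by
  rw [Finset.mem_Icc] at hi
  have hnodup : (List.range' 2 (m - 1)).Nodup := List.nodup_range'
  have hmem : i ∈ List.range' 2 (m - 1) := by
    rw [List.mem_range'_1]
    omega
  have herase := hnodup.erase_eq_filter i
  have hlen := List.length_erase_of_mem hmem
  rw [herase, List.length_range'] at hlen
  have hsub : m - 1 - 1 = m - 2 := by omega
  rw [← hsub, ← hlen]
  congr 2 with j
  by_cases h : j = i <;> simp [h]

/-- with `α₂ = y`, `αⱼ = cⱼx + y` (`3 ≤ j ≤ m`, the `cⱼ` pairwise distinct and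
nonzero), `β̃ ∈ ℂ^m` with `β̃₁ ≠ −1`, `P = X∂x + Y∂y − |β̃|` and
`Q = (Π_{j=2}^m Aⱼ)∂y − Σ_{i=2}^m β̃ᵢ Π_{j=2,j≠i}^m Aⱼ`, the left ideals satisfy
`A₂X + A₂P + A₂Q = A₂X + A₂(Y∂y − (|β̃|+1)) + A₂Y^{m−2}`. -/
theorem stmt13 (m : ℕ) (hm : 2 ≤ m) (c : ℕ → ℂ)
    (hc0 : ∀ j, 3 ≤ j → j ≤ m → c j ≠ 0)
    (hcne : ∀ j j', 3 ≤ j → j ≤ m → 3 ≤ j' → j' ≤ m → j ≠ j' → c j ≠ c j')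
    (tβ : ℕ → ℂ) (htβ1 : tβ 1 ≠ -1)
    (P Q : A2)
    (hP : P = wX * wDx + wY * wDy - algebraMap ℂ A2 (∑ i ∈ Finset.Icc 1 m, tβ i))
    (hQ : Q = ((List.range' 2 (m - 1)).map (mulForm c)).prod * wDy -
      ∑ i ∈ Finset.Icc 2 m, tβ i • (((List.range' 2 (m - 1)).filter (· ≠ i)).map (mulForm c)).prod) :
    Ideal.span {wX, P, Q} =
      Ideal.span {wX, wY * wDy - algebraMap ℂ A2 ((∑ i ∈ Finset.Icc 1 m, tβ i) + 1),
        wY ^ (m - 2)} := by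
  set s : ℂ := ∑ i ∈ Finset.Icc 1 m, tβ i with hs
  set t : ℂ := ∑ i ∈ Finset.Icc 2 m, tβ i with ht
  have hst : s = tβ 1 + t := by
    rw [hs, ht, ← Finset.add_sum_Ioc_eq_sum_Icc (by omega : 1 ≤ m)]
    rfl
  set T : A2 := wY * wDy - algebraMap ℂ A2 (s + 1) with hT
  have hPT : P = wDx * wX + T := by
    rw [hP, hT, wDx_mul_wX, map_add, map_one]
    abel
  obtain ⟨q, hq⟩ := exists_prod_mulForm_eq c (List.range' 2 (m - 1))
  choose r hr using fun i => exists_prod_mulForm_eq c ((List.range' 2 (m - 1)).filter (· ≠ i))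
  have hsum : ∑ i ∈ Finset.Icc 2 m,
      tβ i • (((List.range' 2 (m - 1)).filter (· ≠ i)).map (mulForm c)).prod =
      (∑ i ∈ Finset.Icc 2 m, tβ i • r i) * wX + t • wY ^ (m - 2) := by
    rw [Finset.sum_mul, ht, Finset.sum_smul, ← Finset.sum_add_distrib]
    refine Finset.sum_congr rfl fun i hi => ?_
    rw [hr, length_filter_ne_range' hi, smul_add, smul_mul_assoc]
  obtain ⟨u, hu⟩ : ∃ u : A2,
      Q = u * wX + wY ^ (m - 2) * T + (tβ 1 + 1) • wY ^ (m - 2) := by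
    refine ⟨q * wDy - ∑ i ∈ Finset.Icc 2 m, tβ i • r i, ?_⟩
    have hpow : wY ^ (m - 1) = wY ^ (m - 2) * wY := by
      rw [← pow_succ]
      congr 1
      omega
    rw [hQ, hsum, hq, List.length_range', hpow, hT, hst]
    exact add_mul_sub_add_smul_eq wX_mul_wDy q _ _ wY _ _
  have hne : tβ 1 + 1 ≠ 0 := fun h => htβ1 (eq_neg_of_add_eq_zero_left h)
  exact span_triple_eq_of_eq (R := A2) hne hPT hu
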